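/- Let m ≥ 1 and t ≥ 2 be fixed integers. Then there exists n₀ such that for all integers n ≥ n₀, the star-critical Ramsey number satisfies r₊(C_{2m+1}, K₁ + nK_t) = n·t + t, where C_{2m+1} is the cycle on 2m + 1 vertices. -/

import Mathlib

open SimpleGraph

/-- `containsCopy F G` : the graph `F` contains a copy of the graph `G` (as a subgraph). -/
def containsCopy {V W : Type*} (F : SimpleGraph V) (G : SimpleGraph W) : Prop :=
  ∃ f : G →g F, Function.Injective f

/-- `arrows N G H` : every red/blue coloring of the edges of `K_N` (given by the graph `R` of
red edges, whose complement is the graph of blue edges) contains a red copy of `G` or a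
blue copy of `H`. -/
def arrows {V W : Type*} (N : ℕ) (G : SimpleGraph V) (H : SimpleGraph W) : Prop :=
  ∀ R : SimpleGraph (Fin N), containsCopy R G ∨ containsCopy Rᶜ H

/-- The Ramsey number `R(G, H)`. -/
noncomputable def ramseyNumber {V W : Type*} (G : SimpleGraph V) (H : SimpleGraph W) : ℕ :=
  sInf { N : ℕ | 0 < N ∧ arrows N G H }

/-- The generalized fan `K₁ + nK_t` : the join of a single vertex (`none`) with `n` disjoint
copies of `K_t`. -/
def genFan (n t : ℕ) : SimpleGraph (Option (Fin n × Fin t)) :=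
  SimpleGraph.fromRel (fun a b =>
    a = none ∨ ∃ p q : Fin n × Fin t, a = some p ∧ b = some q ∧ p.1 = q.1)

/-- A graph `G` is edge-critical if it has an edge `e` with `χ(G - e) = χ(G) - 1`. -/
def EdgeCritical {V : Type*} (G : SimpleGraph V) : Prop :=
  ∃ u v : V, G.Adj u v ∧ (G.deleteEdges {s(u, v)}).chromaticNumber + 1 = G.chromaticNumber

/-- `K_m ⊔ K_{1,ℓ}` : the complete graph on the `m` vertices `some i`, together with one new
vertex `none` joined to exactly the `ℓ` vertices `some i` with `i < ℓ` (for `ℓ ≤ m`). -/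
def KstarK (m ℓ : ℕ) : SimpleGraph (Option (Fin m)) :=
  SimpleGraph.fromRel (fun a b =>
    ((∃ i : Fin m, a = some i) ∧ ∃ j : Fin m, b = some j) ∨
      (a = none ∧ ∃ j : Fin m, b = some j ∧ (j : ℕ) < ℓ))

/-- `starArrows m ℓ G H` : every red/blue coloring of the edges of `K_m ⊔ K_{1,ℓ}` (the red
edges forming a subgraph `R`, the blue edges the remaining edges) contains a red copy of `G`
or a blue copy of `H`. -/
def starArrows {V W : Type*} (m ℓ : ℕ) (G : SimpleGraph V) (H : SimpleGraph W) : Prop :=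
  ∀ R : SimpleGraph (Option (Fin m)), R ≤ KstarK m ℓ →
    containsCopy R G ∨ containsCopy (KstarK m ℓ \ R) H

/-- The star-critical Ramsey number `r₊(G, H)`. -/
noncomputable def starRamsey {V W : Type*} (G : SimpleGraph V) (H : SimpleGraph W) : ℕ :=
  sInf { ℓ : ℕ | starArrows (ramseyNumber G H - 1) ℓ G H }

/-- The chromatic number of `G` as a natural number. -/
noncomputable def chromNum {V : Type*} (G : SimpleGraph V) : ℕ := G.chromaticNumber.toNat

/-- `s(G)` : the minimum size of a color class over all proper `χ(G)`-colorings of `G`. -/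
noncomputable def minClassSize {V : Type*} (G : SimpleGraph V) : ℕ :=
  sInf { m : ℕ | ∃ C : G.Coloring (Fin (chromNum G)), ∃ i : Fin (chromNum G),
    m = {v | C v = i}.ncard }

/-- `τ(G)` : the minimum, over all proper `χ(G)`-colorings of `G` having a color class `U_j`
of size `s(G)`, over all vertices `v ∈ U_j` and all other color classes `U_i`, of the number
of neighbors of `v` in `U_i`. -/
noncomputable def tauNum {V : Type*} (G : SimpleGraph V) : ℕ :=
  sInf { m : ℕ | ∃ C : G.Coloring (Fin (chromNum G)), ∃ j : Fin (chromNum G),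
    {v | C v = j}.ncard = minClassSize G ∧
    ∃ v, C v = j ∧ ∃ i : Fin (chromNum G), i ≠ j ∧ m = {u | C u = i ∧ G.Adj v u}.ncard }

namespace StarCrit

open Classical in
/-- number of neighbours of `x` in `T` -/
noncomputable def nb {V : Type*} (G : SimpleGraph V) (x : V) (T : Finset V) : Finset V :=
  T.filter (fun z => G.Adj x z)

lemma mem_nb {V : Type*} {G : SimpleGraph V} {x z : V} {T : Finset V} :
    z ∈ nb G x T ↔ z ∈ T ∧ G.Adj x z := by
  classical
  simp [nb]

lemma nb_subset {V : Type*} (G : SimpleGraph V) (x : V) (T : Finset V) : nb G x T ⊆ T := by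
  intro z hz
  exact (mem_nb.1 hz).1

lemma containsCopy_mono {V W : Type*} {F F' : SimpleGraph V} {G : SimpleGraph W} (h : F ≤ F')
    (hc : containsCopy F G) : containsCopy F' G := by
  obtain ⟨f, hf⟩ := hc
  exact ⟨⟨f, fun hab => h (f.map_adj hab)⟩, hf⟩

lemma cycle_of_fun {V : Type*} {G : SimpleGraph V} (k : ℕ) (f : ℕ → V)
    (hinj : ∀ i < k + 2, ∀ j < k + 2, f i = f j → i = j)
    (hadj : ∀ i, i + 1 < k + 2 → G.Adj (f i) (f (i + 1)))
    (hlast : G.Adj (f (k + 1)) (f 0)) : containsCopy G (cycleGraph (k + 2)) := by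
  have key : ∀ u v : Fin (k + 2), v - u = 1 → G.Adj (f u) (f v) := by
    intro u v h
    have hv : v = u + 1 := by rw [← h]; abel
    subst hv
    rcases eq_or_ne u (Fin.last (k + 1)) with rfl | hne
    · simpa using hlast
    · rw [Fin.val_add_one_of_lt (lt_of_le_of_ne (Fin.le_last u) hne)]
      apply hadj
      have : u.val ≠ k + 1 := fun h => hne (Fin.ext h)
      omega
  refine ⟨⟨fun i => f i, ?_⟩, ?_⟩
  · intro u v huv
    rw [cycleGraph_adj] at huv
    rcases huv with h | h
    · exact (key v u h).symm
    · exact key u v h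
  · intro u v h
    exact Fin.ext (hinj u u.2 v v.2 h)

/-- zigzag lemma -/
lemma zigzag {V : Type*} {G : SimpleGraph V} (m : ℕ) (hm : 1 ≤ m) (P T : Finset V)
    (hdisj : ∀ x ∈ P, x ∉ T) (hP : m + 1 ≤ P.card)
    (hcom : ∀ x ∈ P, ∀ y ∈ P, x ≠ y → m ≤ (nb G x (nb G y T)).card)
    (hC : ¬ containsCopy G (cycleGraph (2 * m + 1))) :
    ∀ x ∈ P, ∀ y ∈ P, ¬ G.Adj x y := by
  classical
  intro x hx y hy hxy
  apply hC
  have hne : x ≠ y := hxy.ne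
  -- choose the `p`s
  obtain ⟨p, hpinj, hpP, hp0, hpm⟩ : ∃ p : Fin (m + 1) → V, Function.Injective p ∧
      (∀ i, p i ∈ P) ∧ p 0 = x ∧ p (Fin.last m) = y := by
    let e : Fin P.card → V := fun i => (P.equivFin.symm i : V)
    have he : Function.Injective e := fun i j h => by
      simpa [e] using h
    let e0 : Fin (m + 1) → V := fun i => e (Fin.castLE hP i)
    have he0 : Function.Injective e0 := fun i j h => by
      have := he h
      simpa using this
    have he0P : ∀ i, e0 i ∈ P := fun i => (P.equivFin.symm _).2
    have hsw : ∀ a ∈ P, ∀ b ∈ P, ∀ z ∈ P, Equiv.swap a b z ∈ P := by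
      intro a ha b hb z hz
      rw [Equiv.swap_apply_def]
      split_ifs <;> assumption
    let e1 : Fin (m + 1) → V := fun i => Equiv.swap x (e0 0) (e0 i)
    have he1 : Function.Injective e1 := fun i j h => he0 (by simpa [e1] using h)
    have he1P : ∀ i, e1 i ∈ P := fun i => hsw _ hx _ (he0P 0) _ (he0P i)
    have he10 : e1 0 = x := by simp [e1]
    have hl : e1 (Fin.last m) ≠ x := by
      rw [← he10]
      intro h
      have := he1 h
      simp [Fin.ext_iff] at this
      omega
    refine ⟨fun i => Equiv.swap y (e1 (Fin.last m)) (e1 i), ?_, ?_, ?_, ?_⟩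
    · exact fun i j h => he1 (by simpa using h)
    · exact fun i => hsw _ hy _ (he1P _) _ (he1P i)
    · simp only [he10]
      exact Equiv.swap_apply_of_ne_of_ne hne (Ne.symm hl)
    · simp
  -- choose the `b`s
  let t : Fin m → Finset V := fun i => nb G (p i.castSucc) (nb G (p i.succ) T)
  have ht : ∀ i, m ≤ (t i).card := fun i => by
    apply hcom _ (hpP _) _ (hpP _)
    intro h
    have := hpinj h
    simp [Fin.ext_iff] at this
  obtain ⟨b, hbinj, hb⟩ := (Finset.all_card_le_biUnion_card_iff_exists_injective t).1 (by
    intro s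
    rcases s.eq_empty_or_nonempty with rfl | ⟨i, hi⟩
    · simp
    · calc s.card ≤ m := by simpa using Finset.card_le_univ s
        _ ≤ (t i).card := ht i
        _ ≤ _ := Finset.card_le_card (Finset.subset_biUnion_of_mem t hi))
  have hb' : ∀ i, b i ∈ T ∧ G.Adj (p i.succ) (b i) ∧ G.Adj (p i.castSucc) (b i) := by
    intro i
    have := hb i
    simp only [t, mem_nb] at this
    tauto
  let f : ℕ → V := fun i => if h : i % 2 = 1 ∧ i / 2 < m then b ⟨i / 2, h.2⟩
    else if h' : i / 2 < m + 1 then p ⟨i / 2, h'⟩ else x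
  have fodd : ∀ j (hj : j < m), f (2 * j + 1) = b ⟨j, hj⟩ := by
    intro j hj
    have h1 : (2 * j + 1) % 2 = 1 := by omega
    have h2 : (2 * j + 1) / 2 = j := by omega
    simp [f, h1, h2, hj]
  have feven : ∀ j (hj : j < m + 1), f (2 * j) = p ⟨j, hj⟩ := by
    intro j hj
    simp [f, Nat.lt_succ_iff.mp hj]
  obtain ⟨k, rfl⟩ : ∃ k, m = k + 1 := ⟨m - 1, by omega⟩
  have : 2 * (k + 1) + 1 = (2 * k + 1) + 2 := by ring
  rw [this]
  apply cycle_of_fun (2 * k + 1) f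
  · intro i hi j hj hij
    rcases Nat.even_or_odd' i with ⟨i', rfl | rfl⟩ <;> rcases Nat.even_or_odd' j with ⟨j', rfl | rfl⟩
    · rw [feven i' (by omega), feven j' (by omega)] at hij
      have := hpinj hij
      simp at this
      omega
    · rw [feven i' (by omega), fodd j' (by omega)] at hij
      exact absurd (hb' ⟨j', by omega⟩).1 (hij ▸ hdisj _ (hpP _))
    · rw [fodd i' (by omega), feven j' (by omega)] at hij
      exact absurd (hb' ⟨i', by omega⟩).1 (hij ▸ hdisj _ (hpP _))
    · rw [fodd i' (by omega), fodd j' (by omega)] at hij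
      have := hbinj hij
      simp at this
      omega
  · intro i hi
    rcases Nat.even_or_odd' i with ⟨i', rfl | rfl⟩
    · rw [feven i' (by omega), fodd i' (by omega)]
      exact (hb' ⟨i', by omega⟩).2.2
    · have : 2 * i' + 1 + 1 = 2 * (i' + 1) := by ring
      rw [this, feven (i' + 1) (by omega), fodd i' (by omega)]
      exact (hb' ⟨i', by omega⟩).2.1.symm
  · have h1 : f (2 * k + 1 + 1) = y := by
      have : 2 * k + 1 + 1 = 2 * (k + 1) := by ring
      rw [this, feven (k + 1) (by omega), ← hpm]
      rfl
    have h0 : f 0 = x := by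
      have := feven 0 (by omega)
      rw [← hp0]
      simpa using this
    rw [h1, h0]
    exact hxy.symm

/-- numeric version -/
lemma zigzag' {V : Type*} {G : SimpleGraph V} (m h : ℕ) (hm : 1 ≤ m) (hh : 8 * m ≤ h)
    (P T : Finset V)
    (hdisj : ∀ x ∈ P, x ∉ T) (hP : m + 1 ≤ P.card) (hT : 8 * T.card ≤ 9 * h)
    (hcom : ∀ x ∈ P, ∀ y ∈ P, x ≠ y → 10 * h ≤ 8 * ((nb G x T).card + (nb G y T).card))
    (hC : ¬ containsCopy G (cycleGraph (2 * m + 1))) :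
    ∀ x ∈ P, ∀ y ∈ P, ¬ G.Adj x y := by
  classical
  apply zigzag m hm P T hdisj hP _ hC
  intro x hx y hy hxy
  have h1 := hcom x hx y hy hxy
  have h2 : nb G x (nb G y T) = nb G x T ∩ nb G y T := by
    ext z
    simp only [mem_nb, Finset.mem_inter]
    tauto
  have h3 := Finset.card_union_add_card_inter (nb G x T) (nb G y T)
  have h4 : (nb G x T ∪ nb G y T).card ≤ T.card :=
    Finset.card_le_card (Finset.union_subset (nb_subset _ _ _) (nb_subset _ _ _))
  rw [h2]
  omega

lemma path_in {V : Type*} {G : SimpleGraph V} (S : Finset V) (k : ℕ) (hS : S.Nonempty)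
    (hd : ∀ x ∈ S, k ≤ (nb G x S).card) :
    ∀ j ≤ k, ∃ f : ℕ → V, (∀ i ≤ j, f i ∈ S) ∧ (∀ i ≤ j, ∀ i' ≤ j, f i = f i' → i = i') ∧
      ∀ i < j, G.Adj (f i) (f (i + 1)) := by
  classical
  intro j
  induction j with
  | zero =>
    intro _
    obtain ⟨x, hx⟩ := hS
    exact ⟨fun _ => x, by simp [hx], by simp, by simp⟩
  | succ j ih =>
    intro hj
    obtain ⟨f, h1, h2, h3⟩ := ih (by omega)
    have hw : ∃ w ∈ nb G (f j) S, w ∉ (Finset.range j).image f := by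
      by_contra! hcon
      have hle := Finset.card_le_card (show nb G (f j) S ⊆ (Finset.range j).image f from hcon)
      have := Finset.card_image_le (s := Finset.range j) (f := f)
      have := hd _ (h1 j le_rfl)
      simp at *
      omega
    obtain ⟨w, hw, hw'⟩ := hw
    rw [mem_nb] at hw
    have hwn : ∀ i ≤ j, f i ≠ w := by
      intro i hi hc
      rcases eq_or_lt_of_le hi with rfl | hlt
      · exact hw.2.ne hc
      · exact hw' (Finset.mem_image.2 ⟨i, by simpa using hlt, hc⟩)
    refine ⟨fun i => if i ≤ j then f i else w, ?_, ?_, ?_⟩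
    · intro i hi
      dsimp only
      split_ifs with h
      · exact h1 i h
      · exact hw.1
    · intro i hi i' hi' h
      dsimp only at h
      split_ifs at h with a b b
      · exact h2 _ a _ b h
      · exact absurd h (hwn _ a)
      · exact absurd h.symm (hwn _ b)
      · omega
    · intro i hi
      dsimp only
      rw [if_pos (by omega : i ≤ j)]
      split_ifs with b
      · exact h3 i (by omega)
      · have : i = j := by omega
        subst this
        exact hw.2

lemma low_deg {V : Type*} {G : SimpleGraph V} (m : ℕ) (hm : 1 ≤ m)
    (hC : ¬ containsCopy G (cycleGraph (2 * m + 1))) (v : V) (S : Finset V) (hS : S.Nonempty)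
    (hv : ∀ x ∈ S, G.Adj v x) : ∃ x ∈ S, (nb G x S).card ≤ 2 * m := by
  classical
  by_contra! hcon
  obtain ⟨f, h1, h2, h3⟩ := path_in S (2 * m) hS (fun x hx => (hcon x hx).le) (2 * m - 1) (by omega)
  apply hC
  obtain ⟨k, rfl⟩ : ∃ k, m = k + 1 := ⟨m - 1, by omega⟩
  have e1 : 2 * (k + 1) + 1 = (2 * k + 1) + 2 := by ring
  have e2 : 2 * (k + 1) - 1 = 2 * k + 1 := by omega
  rw [e1]
  rw [e2] at h1 h2 h3
  have hne : ∀ i ≤ 2 * k + 1, f i ≠ v := fun i hi h => (hv _ (h1 i hi)).ne h.symm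
  apply cycle_of_fun (2 * k + 1) (fun i => if i ≤ 2 * k + 1 then f i else v)
  · intro i hi i' hi' h
    split_ifs at h with a b b
    · exact h2 _ a _ b h
    · exact absurd h (hne _ a)
    · exact absurd h.symm (hne _ b)
    · omega
  · intro i hi
    rw [if_pos (by omega : i ≤ 2 * k + 1)]
    split_ifs with b
    · exact h3 i (by omega)
    · exact (hv _ (h1 i (by omega))).symm
  · rw [if_neg (by omega), if_pos (by omega)]
    exact hv _ (h1 0 (by omega))

lemma degen {V : Type*} {G : SimpleGraph V} (d : ℕ) : ∀ (k : ℕ) (A : Finset V), A.card = k →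
    (∀ S ⊆ A, S.Nonempty → ∃ x ∈ S, (nb G x S).card ≤ d) →
    ∑ a ∈ A, (nb G a A).card ≤ 2 * d * k := by
  classical
  intro k
  induction k with
  | zero =>
    intro A hA _
    simp [Finset.card_eq_zero.1 hA]
  | succ k ih =>
    intro A hA h
    obtain ⟨x, hx, hxd⟩ := h A subset_rfl (Finset.card_pos.1 (by omega))
    have hi := ih (A.erase x) (by rw [Finset.card_erase_of_mem hx]; omega)
      (fun S hS hS' => h S (hS.trans (Finset.erase_subset _ _)) hS')
    rw [← Finset.add_sum_erase _ _ hx]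
    have : ∑ a ∈ A.erase x, (nb G a A).card
        = ∑ a ∈ A.erase x, ((nb G a (A.erase x)).card + if G.Adj x a then 1 else 0) := by
      apply Finset.sum_congr rfl
      intro a ha
      have hA' : A = insert x (A.erase x) := (Finset.insert_erase hx).symm
      conv_lhs => rw [hA']
      unfold nb
      rw [Finset.filter_insert]
      simp only [G.adj_comm a x]
      split_ifs with hh
      · rw [Finset.card_insert_of_notMem (by simp)]
      · simp
    rw [this, Finset.sum_add_distrib, Finset.sum_boole]
    have h5 : ((A.erase x).filter (fun a => G.Adj x a)).card ≤ (nb G x A).card := by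
      apply Finset.card_le_card
      intro a
      simp only [mem_nb, Finset.mem_filter, Finset.mem_erase]
      tauto
    simp only [Nat.cast_id]
    nlinarith

lemma few_bad {V : Type*} {G : SimpleGraph V} (m h : ℕ) (hm : 1 ≤ m) (hh : 1 ≤ h)
    (hC : ¬ containsCopy G (cycleGraph (2 * m + 1))) (v : V) (A : Finset V)
    (hv : ∀ x ∈ A, G.Adj v x) (hA : A.card ≤ 2 * h) :
    ∃ D ⊆ A, D.card ≤ 128 * m ∧ ∀ a ∈ A, a ∉ D → 16 * (nb G a A).card < h := by
  classical
  refine ⟨A.filter (fun a => h ≤ 16 * (nb G a A).card), Finset.filter_subset _ _, ?_, ?_⟩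
  · have h1 := degen (G := G) (2 * m) A.card A rfl (fun S hS hS' => by
      exact low_deg m hm hC v S hS' (fun x hx => hv x (hS hx)))
    set D := A.filter (fun a => h ≤ 16 * (nb G a A).card) with hD
    have h2 : D.card * h ≤ 16 * ∑ a ∈ A, (nb G a A).card := by
      rw [Finset.mul_sum]
      calc D.card * h = ∑ a ∈ D, h := by simp
        _ ≤ ∑ a ∈ D, 16 * (nb G a A).card := Finset.sum_le_sum (fun a ha => (Finset.mem_filter.1 ha).2)
        _ ≤ _ := Finset.sum_le_sum_of_subset (Finset.filter_subset _ _)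
    have h3 : D.card * h ≤ (128 * m) * h := by
      calc D.card * h ≤ 16 * (2 * (2 * m) * A.card) := h2.trans (by omega)
        _ ≤ 16 * (2 * (2 * m) * (2 * h)) := by gcongr
        _ = _ := by ring
    exact Nat.le_of_mul_le_mul_right h3 hh
  · intro a ha hna
    by_contra! hc
    exact hna (Finset.mem_filter.2 ⟨ha, hc⟩)


lemma nb_split {V : Type*} [Fintype V] {G : SimpleGraph V} (A B : Finset V)
    (K : ℕ) (hK : ∀ Z : Finset V, (∀ z ∈ Z, z ∉ A ∧ z ∉ B) → Z.card ≤ K) (x : V) :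
    (nb G x Finset.univ).card ≤ (nb G x A).card + (nb G x B).card + K := by
  classical
  have h1 : nb G x Finset.univ ⊆ (nb G x A ∪ nb G x B) ∪ (Finset.univ \ (A ∪ B)) := by
    intro z
    simp only [mem_nb, Finset.mem_union, Finset.mem_sdiff, Finset.mem_univ, true_and]
    tauto
  have h2 := Finset.card_le_card h1
  have h3 := Finset.card_union_le (nb G x A ∪ nb G x B) (Finset.univ \ (A ∪ B))
  have h4 := Finset.card_union_le (nb G x A) (nb G x B)
  have h5 := hK (Finset.univ \ (A ∪ B)) (by
    intro z
    simp)
  omega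

lemma one_side {V : Type*} {G : SimpleGraph V} (m h : ℕ) (hm : 1 ≤ m) (hh : 8 * (m + 1) ≤ h)
    (hC : ¬ containsCopy G (cycleGraph (2 * m + 1))) (A B : Finset V)
    (hAB : ∀ x ∈ A, x ∉ B) (hBc : m + 1 ≤ B.card) (hA : 8 * A.card ≤ 9 * h)
    (hB : ∀ b ∈ B, 7 * h ≤ 8 * (nb G b A).card)
    (w : V) (hwA : w ∉ A) (hw : 3 * h ≤ 8 * (nb G w A).card) :
    ∀ b ∈ B, ¬ G.Adj w b := by
  classical
  intro b hb
  refine zigzag' m h hm (by omega) (insert w B) A ?_ ?_ hA ?_ hC w (by simp) b (by simp [hb])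
  · intro x hx hxA
    rcases Finset.mem_insert.1 hx with rfl | hx
    · exact hwA hxA
    · exact hAB x hxA hx
  · exact hBc.trans (Finset.card_le_card (Finset.subset_insert _ _))
  · intro x hx y hy hxy
    rcases Finset.mem_insert.1 hx with hx' | hx' <;> rcases Finset.mem_insert.1 hy with hy' | hy'
    · exact absurd (hx'.trans hy'.symm) hxy
    · have := hB y hy'
      rw [hx']
      omega
    · have := hB x hx'
      rw [hy']
      omega
    · have := hB x hx'
      have := hB y hy'
      omega

lemma bip {V : Type*} [Fintype V] {G : SimpleGraph V} (m c h : ℕ) (hm : 1 ≤ m)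
    (hh : 100 * (c + 130 * m) ≤ h) (hV : Fintype.card V = 2 * h)
    (hdeg : ∀ v, h ≤ (nb G v Finset.univ).card + c)
    (hC : ¬ containsCopy G (cycleGraph (2 * m + 1))) :
    ∃ P : Finset V, (∀ x ∈ P, ∀ y ∈ P, ¬ G.Adj x y) ∧ (∀ x, x ∉ P → ∀ y, y ∉ P → ¬ G.Adj x y) := by
  classical
  have hV' : (Finset.univ : Finset V).card = 2 * h := hV
  obtain ⟨v⟩ : Nonempty V := Fintype.card_pos_iff.1 (by omega)
  set A := nb G v Finset.univ with hAdef
  have hAv : ∀ x ∈ A, G.Adj v x := fun x hx => (mem_nb.1 hx).2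
  have hAc := hdeg v
  rw [← hAdef] at hAc
  have hA2 : A.card ≤ 2 * h := hV' ▸ Finset.card_le_card (Finset.subset_univ A)
  obtain ⟨u, huA, hu⟩ := low_deg m hm hC v A (Finset.card_pos.1 (by omega)) hAv
  set B := nb G u Finset.univ \ A with hBdef
  have hBu : ∀ x ∈ B, G.Adj u x := fun x hx => (mem_nb.1 (Finset.mem_sdiff.1 hx).1).2
  have hBc : h ≤ B.card + c + 2 * m := by
    have h1 : nb G u Finset.univ ⊆ B ∪ nb G u A := by
      intro z
      simp only [hBdef, Finset.mem_union, Finset.mem_sdiff, mem_nb]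
      tauto
    have h2 := Finset.card_le_card h1
    have h3 := Finset.card_union_le B (nb G u A)
    have h4 := hdeg u
    omega
  have hB2 : B.card ≤ 2 * h := hV' ▸ Finset.card_le_card (Finset.subset_univ B)
  obtain ⟨DA, hDA, hDAc, hDAd⟩ := few_bad m h hm (by omega) hC v A hAv hA2
  obtain ⟨DB, hDB, hDBc, hDBd⟩ := few_bad m h hm (by omega) hC u B hBu hB2
  set A' := A \ DA with hA'
  set B' := B \ DB with hB'
  have hA'c : A'.card + DA.card = A.card := Finset.card_sdiff_add_card_eq_card hDA
  have hB'c : B'.card + DB.card = B.card := Finset.card_sdiff_add_card_eq_card hDB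
  have hdis : ∀ x ∈ A', x ∉ B' := by
    intro x hx hx'
    simp only [hA', hB', hBdef, Finset.mem_sdiff] at hx hx'
    tauto
  have hdis' : ∀ x ∈ B', x ∉ A' := fun x hx hx' => hdis x hx' hx
  have hsum : (A' ∪ B').card = A'.card + B'.card :=
    Finset.card_union_of_disjoint (Finset.disjoint_left.2 hdis)
  have hsum2 : (A' ∪ B').card ≤ 2 * h := hV' ▸ Finset.card_le_card (Finset.subset_univ _)
  set K := c + 130 * m with hK
  have hrest : ∀ Z : Finset V, (∀ z ∈ Z, z ∉ A' ∧ z ∉ B') → Z.card ≤ 2 * K := by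
    intro Z hZ
    have h1 : (Z ∪ (A' ∪ B')).card = Z.card + (A' ∪ B').card := by
      apply Finset.card_union_of_disjoint
      rw [Finset.disjoint_left]
      intro z hz
      have := hZ z hz
      simp only [Finset.mem_union]
      tauto
    have h2 : (Z ∪ (A' ∪ B')).card ≤ 2 * h := hV' ▸ Finset.card_le_card (Finset.subset_univ _)
    omega
  have hspl := nb_split (G := G) A' B' (2 * K) hrest
  have hnbA : ∀ a ∈ A', 7 * h ≤ 8 * (nb G a B').card := by
    intro a ha
    have h1 := hDAd a (Finset.mem_sdiff.1 ha).1 (Finset.mem_sdiff.1 ha).2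
    have h2 : (nb G a A').card ≤ (nb G a A).card := Finset.card_le_card (by
      intro z
      simp only [mem_nb, hA', Finset.mem_sdiff]
      tauto)
    have := hspl a
    have := hdeg a
    omega
  have hnbB : ∀ a ∈ B', 7 * h ≤ 8 * (nb G a A').card := by
    intro a ha
    have h1 := hDBd a (Finset.mem_sdiff.1 ha).1 (Finset.mem_sdiff.1 ha).2
    have h2 : (nb G a B').card ≤ (nb G a B).card := Finset.card_le_card (by
      intro z
      simp only [mem_nb, hB', Finset.mem_sdiff]
      tauto)
    have := hspl a
    have := hdeg a
    omega
  have hindA := zigzag' m h hm (by omega) A' B' hdis (by omega) (by omega)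
    (fun x hx y hy _ => by
      have := hnbA x hx
      have := hnbA y hy
      omega) hC
  have hindB := zigzag' m h hm (by omega) B' A' hdis' (by omega) (by omega)
    (fun x hx y hy _ => by
      have := hnbB x hx
      have := hnbB y hy
      omega) hC
  have hnot : ∀ w a b, a ∈ A' → b ∈ B' → G.Adj w a → G.Adj w b → False := by
    intro w a b ha hb hwa hwb
    have hwA : w ∉ A' := fun hw => hindA w hw a ha hwa
    have hwB : w ∉ B' := fun hw => hindB w hw b hb hwb
    have h1 := hspl w
    have h2 := hdeg w
    by_cases h3 : 3 * h ≤ 8 * (nb G w A').card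
    · exact one_side m h hm (by omega) hC A' B' hdis (by omega) (by omega) hnbB w hwA h3 b hb hwb
    · exact one_side m h hm (by omega) hC B' A' hdis' (by omega) (by omega) hnbA w hwB (by omega)
        a ha hwa
  have hempty : ∀ w (T : Finset V), (∀ a ∈ T, ¬ G.Adj w a) → (nb G w T).card = 0 := by
    intro w T hT
    rw [Finset.card_eq_zero, Finset.eq_empty_iff_forall_notMem]
    intro z hz
    exact hT z (mem_nb.1 hz).1 (mem_nb.1 hz).2
  refine ⟨Finset.univ.filter (fun w => ∀ a ∈ A', ¬ G.Adj w a), ?_, ?_⟩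
  · apply zigzag' m h hm (by omega) _ B' _ _ (by omega) _ hC
    · intro x hx hxB
      have h1 := hempty x A' (Finset.mem_filter.1 hx).2
      have := hnbB x hxB
      omega
    · have : A'.card ≤ (Finset.univ.filter (fun w => ∀ a ∈ A', ¬ G.Adj w a)).card := by
        apply Finset.card_le_card
        intro x hx
        exact Finset.mem_filter.2 ⟨Finset.mem_univ _, fun a ha => hindA x hx a ha⟩
      omega
    · intro x hx y hy _
      have h1 := hempty x A' (Finset.mem_filter.1 hx).2
      have h2 := hempty y A' (Finset.mem_filter.1 hy).2
      have := hspl x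
      have := hspl y
      have := hdeg x
      have := hdeg y
      omega
  · have key : ∀ x ∈ Finset.univ.filter (fun w => ¬ ∀ a ∈ A', ¬ G.Adj w a),
        ∀ b ∈ B', ¬ G.Adj x b := by
      intro x hx b hb hxb
      have h1 := (Finset.mem_filter.1 hx).2
      push Not at h1
      obtain ⟨a, ha, hxa⟩ := h1
      exact hnot x a b ha hb hxa hxb
    have := zigzag' (G := G) m h hm (by omega)
      (Finset.univ.filter (fun w => ¬ ∀ a ∈ A', ¬ G.Adj w a)) A' (by
        intro x hx hxA
        exact (Finset.mem_filter.1 hx).2 (fun a ha => hindA x hxA a ha)) (by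
        have : B'.card ≤ (Finset.univ.filter (fun w => ¬ ∀ a ∈ A', ¬ G.Adj w a)).card := by
          apply Finset.card_le_card
          intro x hx
          refine Finset.mem_filter.2 ⟨Finset.mem_univ _, fun hc => ?_⟩
          have h1 := hempty x A' hc
          have := hnbB x hx
          omega
        omega) (by omega) (by
        intro x hx y hy _
        have h1 := hempty x B' (key x hx)
        have h2 := hempty y B' (key y hy)
        have := hspl x
        have := hspl y
        have := hdeg x
        have := hdeg y
        omega) hC
    intro x hx y hy
    exact this x (by simpa using hx) y (by simpa using hy)


lemma ramsey_exists : ∀ s t : ℕ, ∃ c : ℕ, ∀ (V : Type) (G : SimpleGraph V) (S : Finset V),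
    c ≤ S.card → (∃ K ⊆ S, G.IsNClique s K) ∨ (∃ K ⊆ S, Gᶜ.IsNClique t K) := by
  classical
  intro s
  induction s with
  | zero =>
    intro t
    exact ⟨0, fun V G S _ => Or.inl ⟨∅, by simp, by simp [isNClique_iff]⟩⟩
  | succ s ihs =>
    intro t
    induction t with
    | zero => exact ⟨0, fun V G S _ => Or.inr ⟨∅, by simp, by simp [isNClique_iff]⟩⟩
    | succ t iht =>
      obtain ⟨c1, h1⟩ := ihs (t + 1)
      obtain ⟨c2, h2⟩ := iht
      refine ⟨c1 + c2 + 1, fun V G S hS => ?_⟩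
      obtain ⟨v, hv⟩ : S.Nonempty := Finset.card_pos.1 (by omega)
      have hsub : S.erase v ⊆ nb G v S ∪ nb Gᶜ v S := by
        intro z
        simp only [Finset.mem_erase, Finset.mem_union, mem_nb, compl_adj]
        intro hz
        by_cases hvz : G.Adj v z
        · exact Or.inl ⟨hz.2, hvz⟩
        · exact Or.inr ⟨hz.2, hz.1.symm, hvz⟩
      have h3 := Finset.card_le_card hsub
      have h4 := Finset.card_union_le (nb G v S) (nb Gᶜ v S)
      rw [Finset.card_erase_of_mem hv] at h3
      rcases (by omega : c1 ≤ (nb G v S).card ∨ c2 ≤ (nb Gᶜ v S).card) with h | h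
      · rcases h1 V G _ h with ⟨K, hK, hc⟩ | ⟨K, hK, hc⟩
        · refine Or.inl ⟨insert v K, ?_, hc.insert (fun b hb => (mem_nb.1 (hK hb)).2)⟩
          exact Finset.insert_subset hv (hK.trans (nb_subset _ _ _))
        · exact Or.inr ⟨K, hK.trans (nb_subset _ _ _), hc⟩
      · rcases h2 V G _ h with ⟨K, hK, hc⟩ | ⟨K, hK, hc⟩
        · exact Or.inl ⟨K, hK.trans (nb_subset _ _ _), hc⟩
        · refine Or.inr ⟨insert v K, ?_, hc.insert (fun b hb => (mem_nb.1 (hK hb)).2)⟩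
          exact Finset.insert_subset hv (hK.trans (nb_subset _ _ _))

lemma copy_of_clique {V W : Type*} [Fintype W] {G : SimpleGraph V} (F : SimpleGraph W)
    (K : Finset V) (hK : G.IsClique K) (hc : Fintype.card W ≤ K.card) : containsCopy G F := by
  classical
  obtain ⟨e⟩ : Nonempty (W ↪ K) := Function.Embedding.nonempty_of_card_le (by simpa using hc)
  refine ⟨⟨fun w => e w, ?_⟩, ?_⟩
  · intro a b hab
    apply hK (e a).2 (e b).2
    intro h
    exact hab.ne (e.injective (Subtype.ext h))
  · intro a b h
    exact e.injective (Subtype.ext h)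

/-- `S` contains `n` disjoint cliques of size `t`. -/
def Packs {V : Type*} (H : SimpleGraph V) (t : ℕ) (n : ℕ) (S : Finset V) : Prop :=
  ∃ K : Fin n → Finset V, (∀ i, K i ⊆ S) ∧ (∀ i, H.IsNClique t (K i)) ∧
    ∀ i j, i ≠ j → ∀ x ∈ K i, x ∉ K j

lemma Packs.cons {V : Type*} {H : SimpleGraph V} {t n : ℕ} {S S' K0 : Finset V}
    (h : Packs H t n S') (hS' : S' ⊆ S) (hK0 : K0 ⊆ S) (hc : H.IsNClique t K0)
    (hd : ∀ x ∈ K0, x ∉ S') : Packs H t (n + 1) S := by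
  obtain ⟨K, h1, h2, h3⟩ := h
  refine ⟨Fin.cons K0 K, ?_, ?_, ?_⟩
  · intro i
    refine Fin.cases ?_ (fun i => ?_) i
    · simpa using hK0
    · simpa using (h1 i).trans hS'
  · intro i
    refine Fin.cases ?_ (fun i => ?_) i
    · simpa using hc
    · simpa using h2 i
  · intro i j
    refine Fin.cases ?_ (fun i => ?_) i <;> refine Fin.cases ?_ (fun j => ?_) j
    · simp
    · intro _ x hx hxj
      simp only [Fin.cons_zero, Fin.cons_succ] at hx hxj
      exact hd x hx (h1 j hxj)
    · intro _ x hx hxj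
      simp only [Fin.cons_zero, Fin.cons_succ] at hx hxj
      exact hd x hxj (h1 i hx)
    · intro hij x hx
      simp only [Fin.cons_succ] at hx ⊢
      exact h3 i j (fun h => hij (by rw [h])) x hx

lemma packs_greedy {V : Type*} {H : SimpleGraph V} (t c : ℕ) : ∀ (n : ℕ) (S : Finset V),
    (∀ S' ⊆ S, t + c ≤ S'.card → ∃ K ⊆ S', H.IsNClique t K) → n * t + c ≤ S.card →
    Packs H t n S := by
  classical
  intro n
  induction n with
  | zero => intro S _ _; exact ⟨Fin.elim0, fun i => i.elim0, fun i => i.elim0, fun i => i.elim0⟩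
  | succ n ih =>
    intro S h hS
    have e : (n + 1) * t = n * t + t := by ring
    rw [e] at hS
    obtain ⟨K, hK, hc⟩ := h S subset_rfl (by omega)
    refine (ih (S \ K) (fun S' hS' => h S' (hS'.trans Finset.sdiff_subset)) ?_).cons
      Finset.sdiff_subset hK hc ?_
    · have := Finset.card_sdiff_add_card_eq_card hK
      have := hc.card_eq
      omega
    · intro x hx hx'
      exact (Finset.mem_sdiff.1 hx').2 hx

lemma packs_clique {V : Type*} {H : SimpleGraph V} (t n : ℕ) (S : Finset V)
    (hS : H.IsClique S) (hc : n * t ≤ S.card) : Packs H t n S := by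
  apply packs_greedy t 0 n S _ hc
  intro S' hS' h
  obtain ⟨K, hK, hKc⟩ := Finset.exists_subset_card_eq (show t ≤ S'.card by omega)
  exact ⟨K, hK, hS.subset (by exact_mod_cast hK.trans hS'), hKc⟩

lemma fan_of_packs {V : Type*} {H : SimpleGraph V} (t n : ℕ) (S : Finset V) (v : V)
    (hv : ∀ x ∈ S, H.Adj v x) (h : Packs H t n S) : containsCopy H (genFan n t) := by
  obtain ⟨K, h1, h2, h3⟩ := h
  let g : Fin n → Fin t → V := fun i j => ((K i).equivFinOfCardEq (h2 i).card_eq).symm j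
  have hg : ∀ i j, g i j ∈ K i := fun i j => (((K i).equivFinOfCardEq (h2 i).card_eq).symm j).2
  have hginj : ∀ i j j', g i j = g i j' → j = j' := fun i j j' h => by
    simpa [g] using h
  have hvn : ∀ i j, v ≠ g i j := fun i j => (hv _ (h1 i (hg i j))).ne
  let F : Option (Fin n × Fin t) → V := fun a => a.elim v (fun p => g p.1 p.2)
  have hF : Function.Injective F := by
    rintro (_ | ⟨i, j⟩) (_ | ⟨i', j'⟩) hab
    · rfl
    · exact absurd hab (hvn _ _)
    · exact absurd hab.symm (hvn _ _)
    · have hab' : g i j = g i' j' := hab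
      by_cases hi : i = i'
      · subst hi
        rw [hginj _ _ _ hab']
      · exact absurd (hab' ▸ hg i' j') (h3 i i' hi _ (hg i j))
  have key : ∀ a b : Option (Fin n × Fin t), a ≠ b →
      (a = none ∨ ∃ p q : Fin n × Fin t, a = some p ∧ b = some q ∧ p.1 = q.1) →
      H.Adj (F a) (F b) := by
    rintro a b hab (rfl | ⟨⟨i, j⟩, ⟨i', j'⟩, rfl, rfl, rfl⟩)
    · rcases b with _ | ⟨i, j⟩
      · exact absurd rfl hab
      · exact hv _ (h1 i (hg i j))
    · exact (h2 i).isClique (hg i j) (hg i j') (fun h => hab (hF h))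
  refine ⟨⟨F, ?_⟩, hF⟩
  intro a b hab
  rw [genFan, fromRel_adj] at hab
  rcases hab with ⟨hne, h | h⟩
  · exact key a b hne h
  · exact (key b a hne.symm h).symm

lemma fan_of_almost {V : Type*} {H : SimpleGraph V} (t n : ℕ) (hn : 1 ≤ n) (ht : 1 ≤ t)
    (X : Finset V) (v : V)
    (hX : H.IsClique X) (hXc : X.card = n * t) (hv : v ∉ X) (hY : t ≤ (nb H v X).card) :
    containsCopy H (genFan n t) := by
  classical
  obtain ⟨Y, hYs, hYc⟩ := Finset.exists_subset_card_eq hY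
  have hYX : Y ⊆ X := hYs.trans (nb_subset _ _ _)
  obtain ⟨y, hy⟩ : Y.Nonempty := Finset.card_pos.1 (by omega)
  obtain ⟨n, rfl⟩ : ∃ k, n = k + 1 := ⟨n - 1, by omega⟩
  have hvY : v ∉ Y := fun h => hv (hYX h)
  have hp : Packs H t n (X \ Y) := by
    apply packs_clique
    · exact hX.subset (by exact_mod_cast Finset.sdiff_subset)
    · have := Finset.card_sdiff_add_card_eq_card hYX
      have e : (n + 1) * t = n * t + t := by ring
      omega
  have hK : H.IsNClique t (insert v (Y.erase y)) := by
    have h1 : H.IsNClique (t - 1) (Y.erase y) := by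
      refine ⟨hX.subset (by exact_mod_cast (Finset.erase_subset _ _).trans hYX), ?_⟩
      rw [Finset.card_erase_of_mem hy, hYc]
    have h2 := h1.insert (a := v) (fun b hb => (mem_nb.1 (hYs (Finset.mem_of_mem_erase hb))).2)
    rwa [Nat.sub_add_cancel ht] at h2
  apply fan_of_packs t (n + 1) (insert v (X.erase y)) y
  · intro x hx
    rcases Finset.mem_insert.1 hx with rfl | hx
    · exact (mem_nb.1 (hYs hy)).2.symm
    · exact hX (hYX hy) (Finset.mem_of_mem_erase hx) (Finset.ne_of_mem_erase hx).symm
  · refine hp.cons ?_ ?_ hK ?_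
    · intro x hx
      rw [Finset.mem_sdiff] at hx
      refine Finset.mem_insert_of_mem (Finset.mem_erase.2 ⟨?_, hx.1⟩)
      rintro rfl
      exact hx.2 hy
    · exact Finset.insert_subset_insert _ (Finset.erase_subset_erase _ hYX)
    · intro x hx hx'
      rw [Finset.mem_sdiff] at hx'
      rcases Finset.mem_insert.1 hx with rfl | hx
      · exact hv hx'.1
      · exact hx'.2 (Finset.mem_of_mem_erase hx)


lemma upper (m t : ℕ) (hm : 1 ≤ m) (ht : 2 ≤ t) : ∃ n₀ : ℕ, 1 ≤ n₀ ∧ ∀ n : ℕ, n₀ ≤ n →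
    starArrows (2 * (n * t)) (n * t + t) (cycleGraph (2 * m + 1)) (genFan n t) := by
  classical
  obtain ⟨c, hc⟩ := ramsey_exists (2 * m + 1) t
  refine ⟨100 * ((c + 1) + 130 * m) + 100 * t, by omega, fun n hn => ?_⟩
  have hnt : n ≤ n * t := Nat.le_mul_of_pos_right n (by omega)
  obtain ⟨h, hh⟩ : ∃ h, h = n * t := ⟨_, rfl⟩
  rw [← hh] at hnt ⊢
  intro R hR
  by_contra! hcon
  obtain ⟨hC, hF⟩ := hcon
  set Kg := KstarK (2 * h) (h + t) with hKg
  set H := Kg \ R with hH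
  let G : SimpleGraph (Fin (2 * h)) := R.comap some
  have hKadj : ∀ a b : Fin (2 * h), Kg.Adj (some a) (some b) ↔ a ≠ b := by
    intro a b
    simp [hKg, KstarK, fromRel_adj]
  have hKnone : ∀ a : Fin (2 * h), Kg.Adj none (some a) ↔ (a : ℕ) < h + t := by
    intro a
    simp [hKg, KstarK, fromRel_adj]
  have hGR : ∀ a b : Fin (2 * h), G.Adj a b ↔ R.Adj (some a) (some b) := fun a b => Iff.rfl
  have hGcH : ∀ a b : Fin (2 * h), Gᶜ.Adj a b ↔ H.Adj (some a) (some b) := by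
    intro a b
    rw [compl_adj, hH, sdiff_adj, hKadj, hGR]
  have hGC : ¬ containsCopy G (cycleGraph (2 * m + 1)) := by
    rintro ⟨f, hf⟩
    exact hC ⟨⟨fun x => some (f x), fun hab => (hGR _ _).1 (f.map_adj hab)⟩,
      fun a b hab => hf (Option.some_injective _ hab)⟩
  have hGF : ¬ containsCopy Gᶜ (genFan n t) := by
    rintro ⟨f, hf⟩
    exact hF ⟨⟨fun x => some (f x), fun hab => (hGcH _ _).1 (f.map_adj hab)⟩,
      fun a b hab => hf (Option.some_injective _ hab)⟩
  -- red degrees are large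
  have hdeg : ∀ v, h ≤ (nb G v Finset.univ).card + (c + 1) := by
    intro v
    by_contra! hlt
    apply hGF
    apply fan_of_packs t n (nb Gᶜ v Finset.univ) v (fun x hx => (mem_nb.1 hx).2)
    apply packs_greedy t c
    · intro S' _ hS'
      rcases hc _ G S' (by omega) with ⟨K, _, hKc⟩ | hK
      · exact absurd (copy_of_clique _ K hKc.isClique (by simp [hKc.card_eq])) hGC
      · exact hK
    · have hsub : (Finset.univ : Finset (Fin (2 * h))) ⊆
          insert v (nb G v Finset.univ ∪ nb Gᶜ v Finset.univ) := by
        intro z _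
        simp only [Finset.mem_insert, Finset.mem_union, mem_nb, compl_adj, Finset.mem_univ, true_and]
        by_cases hz : z = v
        · exact Or.inl hz
        · by_cases hvz : G.Adj v z
          · exact Or.inr (Or.inl hvz)
          · exact Or.inr (Or.inr ⟨Ne.symm hz, hvz⟩)
      have h1 := Finset.card_le_card hsub
      have h2 := Finset.card_insert_le v (nb G v Finset.univ ∪ nb Gᶜ v Finset.univ)
      have h3 := Finset.card_union_le (nb G v Finset.univ) (nb Gᶜ v Finset.univ)
      simp only [Finset.card_univ, Fintype.card_fin] at h1
      omega
  obtain ⟨P, hP1, hP2⟩ := bip m (c + 1) h hm (by omega) (by simp) hdeg hGC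
  set Q := Pᶜ with hQ
  have hQ2 : ∀ x ∈ Q, ∀ y ∈ Q, ¬ G.Adj x y := fun x hx y hy =>
    hP2 x (Finset.mem_compl.1 hx) y (Finset.mem_compl.1 hy)
  have hPQ : P.card + Q.card = 2 * h := by
    rw [hQ, Finset.card_add_card_compl, Fintype.card_fin]
  -- a facts for any independent set
  have hcl : ∀ S : Finset (Fin (2 * h)), (∀ x ∈ S, ∀ y ∈ S, ¬ G.Adj x y) → S.card ≤ h := by
    intro S hS
    by_contra! hlt
    apply hGF
    apply copy_of_clique _ S
    · intro x hx y hy hxy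
      exact ⟨hxy, hS x hx y hy⟩
    · simp only [Fintype.card_option, Fintype.card_prod, Fintype.card_fin]
      omega
  have hPc : P.card = h := by
    have := hcl P hP1
    have := hcl Q hQ2
    omega
  have hQc : Q.card = h := by omega
  let em : Finset (Fin (2 * h)) → Finset (Option (Fin (2 * h))) := fun S =>
    S.map Function.Embedding.some
  have hemc : ∀ S, (em S).card = S.card := fun S => Finset.card_map _
  have hmem : ∀ S x, some x ∈ em S ↔ x ∈ S := fun S x => by simp [em]
  have hnone : ∀ S, none ∉ em S := fun S => by simp [em]
  have hblue : ∀ S : Finset (Fin (2 * h)), (∀ x ∈ S, ∀ y ∈ S, ¬ G.Adj x y) → S.card = h →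
      (nb H none (em S)).card < t := by
    intro S hS hSc
    by_contra! hlt
    apply hF
    apply fan_of_almost t n (by omega) (by omega) (em S) none _ (by rw [hemc, hSc, hh]) (hnone S) hlt
    intro x hx y hy hxy
    rcases x with _ | x
    · exact absurd hx (hnone S)
    rcases y with _ | y
    · exact absurd hy (hnone S)
    have hx' : x ∈ S := (hmem S x).1 hx
    have hy' : y ∈ S := (hmem S y).1 hy
    exact (hGcH x y).1 ⟨fun h => hxy (by rw [h]), hS x hx' y hy'⟩
  have hbP := hblue P hP1 hPc
  have hbQ := hblue Q hQ2 hQc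
  have hsplit : ∀ S, (nb Kg none (em S)).card ≤ (nb R none (em S)).card + (nb H none (em S)).card := by
    intro S
    refine le_trans (Finset.card_le_card ?_) (Finset.card_union_le _ _)
    intro z
    simp only [mem_nb, Finset.mem_union, hH, sdiff_adj]
    tauto
  have htot : h + t ≤ (nb Kg none (em P)).card + (nb Kg none (em Q)).card := by
    have h1 : (Finset.univ.filter (fun a : Fin (2 * h) => (a : ℕ) < h + t)).card = h + t := by
      have : h + t ≤ 2 * h := by omega
      simp [Fin.card_filter_val_lt, this]
    have h2 : em (Finset.univ.filter (fun a : Fin (2 * h) => (a : ℕ) < h + t)) ⊆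
        nb Kg none (em P) ∪ nb Kg none (em Q) := by
      intro z hz
      rcases z with _ | a
      · exact absurd hz (hnone _)
      rw [hmem, Finset.mem_filter] at hz
      simp only [mem_nb, Finset.mem_union, hmem, hKnone, hQ, Finset.mem_compl]
      tauto
    have h3 := Finset.card_le_card h2
    rw [hemc, h1] at h3
    exact h3.trans (Finset.card_union_le _ _)
  have hle : ∀ S, (nb Kg none (em S)).card ≤ S.card := fun S =>
    (Finset.card_le_card (nb_subset _ _ _)).trans (hemc S).le
  -- transfer of degrees
  have htr : ∀ S S' : Finset (Fin (2 * h)), (∀ x, x ∈ S ∨ x ∈ S') →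
      (∀ x ∈ S, ∀ y ∈ S, ¬ G.Adj x y) → ∀ b ∈ em S, 7 * h ≤ 8 * (nb R b (em S')).card := by
    intro S S' hSS hS b hb
    rcases b with _ | b
    · exact absurd hb (hnone S)
    rw [hmem] at hb
    have h1 : em (nb G b Finset.univ) ⊆ nb R (some b) (em S') := by
      intro z hz
      rcases z with _ | a
      · exact absurd hz (hnone _)
      rw [hmem, mem_nb] at hz
      rw [mem_nb, hmem]
      refine ⟨(hSS a).resolve_left (fun ha => hS b hb a ha hz.2), hz.2⟩
    have h2 := Finset.card_le_card h1
    rw [hemc] at h2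
    have := hdeg b
    omega
  have hfin : ∀ S S' : Finset (Fin (2 * h)), (∀ x, x ∈ S ∨ x ∈ S') → (∀ x ∈ S, x ∉ S') →
      (∀ x ∈ S, ∀ y ∈ S, ¬ G.Adj x y) → S.card = h → S'.card = h →
      1 ≤ (nb R none (em S)).card → 3 * h ≤ 8 * (nb R none (em S')).card → False := by
    intro S S' h1 h2 h3 h4 h5 h6 h7
    obtain ⟨z, hz⟩ := Finset.card_pos.1 h6
    rw [mem_nb] at hz
    refine one_side m h hm (by omega) hC (em S') (em S) ?_ (by rw [hemc]; omega)
      (by rw [hemc]; omega) (htr S S' h1 h3) none (hnone S') h7 z hz.1 hz.2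
    intro x hx hx'
    rcases x with _ | x
    · exact absurd hx (hnone _)
    rw [hmem] at hx hx'
    exact h2 x hx' hx
  have hs1 := hsplit P
  have hs2 := hsplit Q
  have hl1 := hle P
  have hl2 := hle Q
  rcases (by omega : 3 * h ≤ 8 * (nb R none (em Q)).card ∨ 3 * h ≤ 8 * (nb R none (em P)).card) with h7 | h7
  · exact hfin P Q (fun x => by rw [hQ, Finset.mem_compl]; tauto) (fun x hx => by simp [hQ, hx]) hP1 hPc hQc (by omega) h7
  · exact hfin Q P (fun x => by rw [hQ, Finset.mem_compl]; tauto) (fun x hx => by simpa [hQ] using hx) hQ2 hQc hPc (by omega) h7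

lemma no_odd {V : Type*} {R : SimpleGraph V} (cl : V → Prop)
    (h : ∀ a b, R.Adj a b → (cl a ↔ ¬ cl b)) (m : ℕ) (hm : 1 ≤ m) :
    ¬ containsCopy R (cycleGraph (2 * m + 1)) := by
  classical
  rintro ⟨f, hf⟩
  have hcol : (cycleGraph (2 * m + 1)).Colorable 2 := by
    have C : (cycleGraph (2 * m + 1)).Coloring Bool := Coloring.mk (fun x => decide (cl (f x))) (by
      intro a b hab
      have := h _ _ (f.map_adj hab)
      simp only [ne_eq, decide_eq_decide]
      tauto)
    simpa using C.colorable
  have h1 := hcol.chromaticNumber_le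
  rw [chromaticNumber_cycleGraph_of_odd (2 * m + 1) (by omega) ⟨m, rfl⟩] at h1
  exact absurd h1 (by decide)

lemma fan_class {V : Type*} [Fintype V] {H : SimpleGraph V} (cl : V → Prop)
    (h : ∀ a b, H.Adj a b → (cl a ↔ cl b)) (n t : ℕ) (f : genFan n t →g H) :
    ∀ a, cl (f a) ↔ cl (f none) := by
  intro a
  rcases a with _ | p
  · rfl
  · exact (h _ _ (f.map_adj (by simp [genFan]))).symm

lemma ramsey_lower (m n t N : ℕ) (hm : 1 ≤ m) (hN : N ≤ 2 * (n * t)) :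
    ¬ arrows N (cycleGraph (2 * m + 1)) (genFan n t) := by
  classical
  intro harr
  let R : SimpleGraph (Fin N) := SimpleGraph.fromRel (fun a b => a.val < n * t ∧ ¬ b.val < n * t)
  have hR : ∀ a b, R.Adj a b ↔ ¬ (a.val < n * t ↔ b.val < n * t) := by
    intro a b
    simp only [R, fromRel_adj]
    constructor
    · tauto
    · intro hab
      refine ⟨?_, by tauto⟩
      rintro rfl
      tauto
  rcases harr R with hc | ⟨f, hf⟩
  · exact no_odd (fun a : Fin N => a.val < n * t) (fun a b hab => by
      have := (hR a b).1 hab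
      tauto) m hm hc
  · have hcl := fan_class (H := Rᶜ) (fun a : Fin N => a.val < n * t) (fun a b hab => by
      have := hab.2
      rw [hR] at this
      tauto) n t f
    have hcard : ∀ S : Finset (Fin N), S.card ≤ n * t → (∀ a, f a ∈ S) → False := by
      intro S hS hfS
      have h1 := Finset.card_le_card_of_injOn (s := Finset.univ) (t := S) f (fun a _ => hfS a)
        (hf.injOn)
      simp at h1
      omega
    by_cases h0 : (f none).val < n * t
    · refine hcard (Finset.univ.filter (fun a => a.val < n * t)) ?_ ?_
      · rw [Fin.card_filter_val_lt]
        omega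
      · intro a
        simpa using (hcl a).2 h0
    · refine hcard (Finset.univ.filter (fun a => ¬ a.val < n * t)) ?_ ?_
      · have h1 := Finset.card_filter_add_card_filter_not (s := (Finset.univ : Finset (Fin N)))
          (fun a => a.val < n * t)
        rw [Fin.card_filter_val_lt, Finset.card_univ, Fintype.card_fin] at h1
        omega
      · intro a
        have : ¬ (f a).val < n * t := fun h => h0 ((hcl a).1 h)
        simpa using this

lemma star_lower (m n t l : ℕ) (hm : 1 ≤ m) (hn : 1 ≤ n) (hl : l < n * t + t) :
    ¬ starArrows (2 * (n * t)) l (cycleGraph (2 * m + 1)) (genFan n t) := by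
  classical
  intro harr
  set h := n * t with hh
  obtain ⟨cl, hcldef⟩ : ∃ cl : Option (Fin (2 * h)) → Prop,
      ∀ a, cl a ↔ ∃ i, a = some i ∧ i.val < h := ⟨_, fun _ => Iff.rfl⟩
  let Kg := KstarK (2 * h) l
  let R : SimpleGraph (Option (Fin (2 * h))) :=
    Kg ⊓ SimpleGraph.fromRel (fun a b => cl a ∧ ¬ cl b)
  have hR : ∀ a b, R.Adj a b ↔ Kg.Adj a b ∧ ¬ (cl a ↔ cl b) := by
    intro a b
    simp only [R, fromRel_adj, inf_adj]
    constructor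
    · tauto
    · intro hab
      refine ⟨hab.1, hab.1.ne, by tauto⟩
  rcases harr R inf_le_left with hc | ⟨f, hf⟩
  · exact no_odd cl (fun a b hab => by
      have := (hR a b).1 hab
      tauto) m hm hc
  · have hcl := fan_class (H := Kg \ R) cl (fun a b hab => by
      have h1 := hab.1
      have h2 := hab.2
      rw [hR] at h2
      tauto) n t f
    have hcard : ∀ S : Finset (Option (Fin (2 * h))), S.card ≤ h → (∀ a, f a ∈ S) → False := by
      intro S hS hfS
      have h1 := Finset.card_le_card_of_injOn (s := Finset.univ) (t := S) f (fun a _ => hfS a)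
        (hf.injOn)
      simp at h1
      omega
    have hA : (Finset.univ.filter (fun a : Fin (2 * h) => a.val < h)).card = h := by
      rw [Fin.card_filter_val_lt]
      omega
    have hB : (Finset.univ.filter (fun a : Fin (2 * h) => ¬ a.val < h)).card = h := by
      have h1 := Finset.card_filter_add_card_filter_not (s := (Finset.univ : Finset (Fin (2 * h))))
          (fun a => a.val < h)
      rw [hA, Finset.card_univ, Fintype.card_fin] at h1
      omega
    by_cases h0 : cl (f none)
    · refine hcard ((Finset.univ.filter (fun a : Fin (2 * h) => a.val < h)).map
        Function.Embedding.some) ?_ ?_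
      · rw [Finset.card_map, hA]
      · intro a
        obtain ⟨i, hi, hi'⟩ := (hcldef _).1 ((hcl a).2 h0)
        rw [hi]
        simpa using hi'
    · have hncl : ∀ a, ¬ cl (f a) := fun a ha => h0 ((hcl a).1 ha)
      by_cases hex : ∃ a, f a = none
      · obtain ⟨a, ha⟩ := hex
        -- `a` has at least `t` neighbours
        obtain ⟨g, hginj, hg⟩ : ∃ g : Fin t → Option (Fin n × Fin t), Function.Injective g ∧
            ∀ j, (genFan n t).Adj a (g j) := by
          rcases a with _ | ⟨i, j⟩
          · refine ⟨fun j => some (⟨0, hn⟩, j), ?_, ?_⟩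
            · intro j j' hjj
              simpa using hjj
            · intro j
              simp [genFan]
          · refine ⟨fun j' => if j' = j then none else some (i, j'), ?_, ?_⟩
            · intro j1 j2 hjj
              dsimp only at hjj
              split_ifs at hjj with h1 h2 h2
              · rw [h1, h2]
              · simpa using hjj
            · intro j'
              dsimp only
              split_ifs with h1
              · simp [genFan]
              · simp [genFan, Ne.symm h1]
        have hval : ∀ j, ∃ i : Fin (2 * h), f (g j) = some i ∧ h ≤ i.val ∧ i.val < l := by
          intro j
          have h1 := (f.map_adj (hg j)).1
          rw [ha] at h1
          rcases hfg : f (g j) with _ | i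
          · rw [hfg] at h1
            exact absurd rfl h1.ne
          · rw [hfg] at h1
            refine ⟨i, rfl, ?_, ?_⟩
            · by_contra! hlt
              exact hncl (g j) ((hcldef _).2 ⟨i, hfg, hlt⟩)
            · simpa [Kg, KstarK] using h1
        choose u hu1 hu2 hu3 using hval
        have h2 := Finset.card_le_card_of_injOn (s := (Finset.univ : Finset (Fin t)))
          (t := Finset.Ico h l) (fun j => (u j).val) (fun j _ => by simp [hu2, hu3]) (by
            intro j _ j' _ hjj
            apply hginj
            apply hf
            rw [hu1, hu1, Fin.ext hjj])
        simp at h2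
        have ht0 : 0 < t := by
          rcases Nat.eq_zero_or_pos t with h3 | h3
          · subst h3
            simp at hh
            omega
          · exact h3
        omega
      · push Not at hex
        refine hcard ((Finset.univ.filter (fun a : Fin (2 * h) => ¬ a.val < h)).map
          Function.Embedding.some) ?_ ?_
        · rw [Finset.card_map, hB]
        · intro a
          rcases hfa : f a with _ | i
          · exact absurd hfa (hex a)
          · have : ¬ i.val < h := fun hlt => hncl a ((hcldef _).2 ⟨i, hfa, hlt⟩)
            simpa using this

lemma arrows_of_star {V W : Type*} (N l : ℕ) (F : SimpleGraph V) (F' : SimpleGraph W)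
    (h : starArrows N l F F') : arrows (N + 1) F F' := by
  classical
  intro R
  let e : Option (Fin N) ≃ Fin (N + 1) := (finSuccEquiv N).symm
  rcases h (R.comap e ⊓ KstarK N l) inf_le_right with ⟨f, hf⟩ | ⟨f, hf⟩
  · exact Or.inl ⟨⟨fun x => e (f x), fun hab => (f.map_adj hab).1⟩, e.injective.comp hf⟩
  · refine Or.inr ⟨⟨fun x => e (f x), fun {a b} hab => ?_⟩, e.injective.comp hf⟩
    have h1 := f.map_adj hab
    refine ⟨fun h => h1.1.ne (e.injective h), fun h => h1.2 ⟨h, h1.1⟩⟩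

end StarCrit

theorem statement_17 (m t : ℕ) (hm : 1 ≤ m) (ht : 2 ≤ t) :
    ∃ n₀ : ℕ, ∀ n : ℕ, n₀ ≤ n →
      starRamsey (SimpleGraph.cycleGraph (2 * m + 1)) (genFan n t) = n * t + t := by
  obtain ⟨n₀, h1, h⟩ := StarCrit.upper m t hm ht
  refine ⟨n₀, fun n hn => ?_⟩
  have hs := h n hn
  have hr : ramseyNumber (cycleGraph (2 * m + 1)) (genFan n t) = 2 * (n * t) + 1 := by
    have hmem : 2 * (n * t) + 1 ∈
        { N : ℕ | 0 < N ∧ arrows N (cycleGraph (2 * m + 1)) (genFan n t) } :=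
      ⟨by omega, StarCrit.arrows_of_star _ _ _ _ hs⟩
    apply le_antisymm (Nat.sInf_le hmem)
    have h2 := Nat.sInf_mem ⟨_, hmem⟩
    by_contra! hlt
    exact StarCrit.ramsey_lower m n t _ hm (by
      have := hlt
      omega) h2.2
  unfold starRamsey
  rw [hr, Nat.add_sub_cancel]
  have hmem : n * t + t ∈
      { l : ℕ | starArrows (2 * (n * t)) l (cycleGraph (2 * m + 1)) (genFan n t) } := hs
  apply le_antisymm (Nat.sInf_le hmem)
  have h2 := Nat.sInf_mem ⟨_, hmem⟩
  by_contra! hlt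
  exact StarCrit.star_lower m n t _ hm (by omega) hlt h2
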